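/- Let X, Y ⊆ ω. If there exists an embedding of pcas of B^X into K2^Y, then the Turing jump X' is Turing reducible to Y. In particular, for no X does B^X embed into K2^X. -/

import Mathlib

namespace PCAEmb

/-! ### Oracle computability -/

/-- Codes for partial functions computable relative to an oracle. -/
inductive OCode : Type
  | zero : OCode
  | succ : OCode
  | left : OCode
  | right : OCode
  | oracle : OCode
  | pair : OCode → OCode → OCode
  | comp : OCode → OCode → OCode
  | prec : OCode → OCode → OCode
  | rfind' : OCode → OCode

/-- Evaluation of an oracle code, relative to a (partial) oracle `O`. -/
def evalo (O : ℕ →. ℕ) : OCode → ℕ →. ℕ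
  | .zero => pure 0
  | .succ => Nat.succ
  | .left => ↑fun n : ℕ => n.unpair.1
  | .right => ↑fun n : ℕ => n.unpair.2
  | .oracle => O
  | .pair cf cg => fun n => Nat.pair <$> evalo O cf n <*> evalo O cg n
  | .comp cf cg => fun n => evalo O cg n >>= evalo O cf
  | .prec cf cg =>
      Nat.unpaired fun a n =>
        n.rec (evalo O cf a) fun y IH => do
          let i ← IH
          evalo O cg (Nat.pair a (Nat.pair y i))
  | .rfind' cf =>
      Nat.unpaired fun a m =>
        (Nat.rfind fun n => (fun x => x = 0) <$> evalo O cf (Nat.pair a (n + m))).map (· + m)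

/-- The standard numbering of oracle codes. -/
def OCode.ofNat : ℕ → OCode
  | 0 => .zero
  | 1 => .succ
  | 2 => .left
  | 3 => .right
  | 4 => .oracle
  | n + 5 =>
    match n % 4 with
    | 0 => .pair (OCode.ofNat (n / 4).unpair.1) (OCode.ofNat (n / 4).unpair.2)
    | 1 => .comp (OCode.ofNat (n / 4).unpair.1) (OCode.ofNat (n / 4).unpair.2)
    | 2 => .prec (OCode.ofNat (n / 4).unpair.1) (OCode.ofNat (n / 4).unpair.2)
    | _ => .rfind' (OCode.ofNat (n / 4).unpair.1)
  decreasing_by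
    all_goals
      have h1 := Nat.unpair_left_le (n / 4)
      have h2 := Nat.unpair_right_le (n / 4)
      have h3 := Nat.div_le_self n 4
      omega

/-- The `e`-th Turing functional with oracle `O` : `Φ_e^O`. -/
def phi (O : ℕ →. ℕ) (e : ℕ) : ℕ →. ℕ := evalo O (OCode.ofNat e)

/-- The characteristic function of a set of naturals, as a (total) partial function. -/
noncomputable def chi (X : Set ℕ) : ℕ →. ℕ :=
  fun n => Part.some (X.indicator (fun _ => 1) n)

/-- `ψ` is partial computable relative to the oracle `O`. -/
def RecursiveIn (O : ℕ →. ℕ) (ψ : ℕ →. ℕ) : Prop := ∃ c : OCode, evalo O c = ψ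

/-- Turing reducibility of sets of naturals. -/
def TuringLE (X Y : Set ℕ) : Prop := RecursiveIn (chi Y) (chi X)

/-- A total function `d : ℕ → ℕ` is `Y`-computable. -/
def ComputableIn (Y : Set ℕ) (d : ℕ → ℕ) : Prop :=
  RecursiveIn (chi Y) (fun n => Part.some (d n))

/-- A binary relation on `ℕ` is `Y`-c.e. -/
def CEIn (Y : Set ℕ) (R : ℕ → ℕ → Prop) : Prop :=
  ∃ c : OCode, ∀ n m, R n m ↔ (evalo (chi Y) c (Nat.pair n m)).Dom

/-- A set `W ⊆ ℕ` is `Y`-c.e. -/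
def CE1In (Y : Set ℕ) (W : Set ℕ) : Prop :=
  ∃ c : OCode, ∀ n, n ∈ W ↔ (evalo (chi Y) c n).Dom

/-- The canonical finite set `D_u` with code `u` (binary coding). -/
def Du (u : ℕ) : Set ℕ := {k | u.testBit k}

/-- Enumeration reducibility: `Z ≤ₑ Y`. -/
def EnumLE (Z Y : Set ℕ) : Prop :=
  ∃ W : Set ℕ, CE1In ∅ W ∧ ∀ x, x ∈ Z ↔ ∃ u, Nat.pair x u ∈ W ∧ Du u ⊆ Y

/-- The Turing jump `X'` of a set `X`. -/
def jump (X : Set ℕ) : Set ℕ := {e | (phi (chi X) e e).Dom}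

/-- The halting set `K = {e : φ_e(e)↓}`. -/
def Khalt : Set ℕ := jump ∅

/-! ### Partial combinatory algebras -/

/-- `k·a·b` as a partial element. -/
def app2 {α : Type*} (app : α → α → Part α) (a b c : α) : Part α :=
  (app a b).bind fun x => app x c

/-- `s·a·b·c` as a partial element. -/
def app3 {α : Type*} (app : α → α → Part α) (a b c d : α) : Part α :=
  (app2 app a b c).bind fun x => app x d

/-- A partial applicative structure is a pca if it has (distinct) combinators `s` and `k`. -/
def IsPCA {α : Type*} (app : α → α → Part α) : Prop :=
  ∃ s k : α, s ≠ k ∧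
    (∀ a b : α, app2 app k a b = Part.some a) ∧
    (∀ a b : α, (app2 app s a b).Dom) ∧
    (∀ a b c : α,
      app3 app s a b c = (app a c).bind fun x => (app b c).bind fun y => app x y)

/-- An embedding of partial combinatory algebras: an injection that preserves
(defined) application. -/
def IsPCAEmbedding {α β : Type*} (appA : α → α → Part α) (appB : β → β → Part β)
    (f : α → β) : Prop :=
  Function.Injective f ∧ ∀ a a' c : α, c ∈ appA a a' → f c ∈ appB (f a) (f a')

/-! ### Partial numberings -/

/-- `γ : ℕ ⇀ α` is a partial numbering (i.e. surjective). -/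
def IsNumbering {α : Type*} (γ : ℕ →. α) : Prop := ∀ a : α, ∃ n, a ∈ γ n

/-- `d` is an `(a⊥, a⊤)`-decider for `X` with respect to `γ`. -/
def IsDecider {α : Type*} (γ : ℕ →. α) (abot atop : α) (X : Set ℕ) (d : ℕ → ℕ) : Prop :=
  ∀ n, (n ∉ X → γ (d n) = Part.some abot) ∧ (n ∈ X → γ (d n) = Part.some atop)

/-- `γ` has `Y`-c.e. inequivalence. -/
def CEInequiv {α : Type*} (Y : Set ℕ) (γ : ℕ →. α) : Prop :=
  ∃ R : ℕ → ℕ → Prop, CEIn Y R ∧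
    ∀ n m, (γ n).Dom → (γ m).Dom → (R n m ↔ γ n ≠ γ m)

/-- `γ` is a `Y`-effectively pca-valued partial numbering: the application is
represented on codes by a partial `Y`-computable function `ψ`. -/
def EffValued {α : Type*} (Y : Set ℕ) (app : α → α → Part α) (γ : ℕ →. α) : Prop :=
  ∃ ψ : ℕ →. ℕ, RecursiveIn (chi Y) ψ ∧
    ∀ (n m : ℕ) (a b c : α), a ∈ γ n → b ∈ γ m → c ∈ app a b →
      ∃ j, j ∈ ψ (Nat.pair n m) ∧ c ∈ γ j

/-- `γ` is a strongly `Y`-effectively pca-valued partial numbering. -/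
def StrongEffValued {α : Type*} (Y : Set ℕ) (app : α → α → Part α) (γ : ℕ →. α) : Prop :=
  ∃ ψ : ℕ →. ℕ, RecursiveIn (chi Y) ψ ∧
    (∀ (n m : ℕ) (a b c : α), a ∈ γ n → b ∈ γ m → c ∈ app a b →
      ∃ j, j ∈ ψ (Nat.pair n m) ∧ c ∈ γ j) ∧
    (∀ (n m k l : ℕ) (a b a' b' c : α), a ∈ γ n → b ∈ γ m → a' ∈ γ k → b' ∈ γ l →
      c ∈ app a b → c ∈ app a' b' → ψ (Nat.pair n m) = ψ (Nat.pair k l))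

/-! ### The models -/

/-- Kleene's first model relativized to `X`: application `n · m = Φ_n^X(m)`. -/
noncomputable def k1App (X : Set ℕ) : ℕ → ℕ → Part ℕ := fun n m => phi (chi X) n m

/-- A total function as a partial function. -/
def toPFun (g : ℕ → ℕ) : ℕ →. ℕ := fun n => Part.some (g n)

/-- Join `f ⊕ g` of two partial functions. -/
def pjoin (f g : ℕ →. ℕ) : ℕ →. ℕ := fun n =>
  if n % 2 = 0 then f (n / 2) else g (n / 2)

/-- The totalization of a partial function, as a partial element of `ℕ → ℕ`:
defined iff `ψ` is total. -/
def partToTotal (ψ : ℕ →. ℕ) : Part (ℕ → ℕ) :=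
  ⟨∀ n, (ψ n).Dom, fun H n => (ψ n).get (H n)⟩

/-- Application in Kleene's second model `K₂`: `g · h = Φ^{g⊕h}_{g 0}`,
defined iff this function is total. -/
def k2App (g h : ℕ → ℕ) : Part (ℕ → ℕ) :=
  partToTotal (phi (pjoin (toPFun g) (toPFun h)) (g 0))

/-- Application in van Oosten's sequential model `B`: `θ · ρ = Φ^{θ⊕ρ}_{θ 0}`
(always defined, as a partial function). -/
def bApp (θ ρ : ℕ →. ℕ) : Part (ℕ →. ℕ) :=
  Part.some (fun n => (θ 0).bind fun e => phi (pjoin θ ρ) e n)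

/-- Restriction of a partial applicative structure to a subset. -/
def subApp {α : Type*} (app : α → α → Part α) (P : α → Prop)
    (a b : Subtype P) : Part (Subtype P) :=
  (app a.1 b.1).bind fun c => Part.assert (P c) fun h => Part.some ⟨c, h⟩

/-- Carrier of `K₂^X` : the total `X`-computable functions. -/
def K2el (X : Set ℕ) : Type := {g : ℕ → ℕ // RecursiveIn (chi X) (toPFun g)}

/-- Application in `K₂^X`. -/
def k2XApp (X : Set ℕ) : K2el X → K2el X → Part (K2el X) :=
  subApp k2App _

/-- Carrier of `B^X` : the partial `X`-computable functions. -/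
def Bel (X : Set ℕ) : Type := {θ : ℕ →. ℕ // RecursiveIn (chi X) θ}

/-- Application in `B^X`. -/
def bXApp (X : Set ℕ) : Bel X → Bel X → Part (Bel X) :=
  subApp bApp _

/-- Application in Scott's graph model `G`. -/
def gApp (A B : Set ℕ) : Part (Set ℕ) :=
  Part.some {n | ∃ u, Nat.pair n u ∈ A ∧ Du u ⊆ B}

/-- Carrier of `G^Z` : the sets enumeration-reducible to `Z`. -/
def Gel (Z : Set ℕ) : Type := {A : Set ℕ // EnumLE A Z}

/-- Application in `G^Z`. -/
def gXApp (Z : Set ℕ) : Gel Z → Gel Z → Part (Gel Z) :=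
  subApp gApp _

/-- `X ⊕ X̄ = {2n : n ∈ X} ∪ {2n+1 : n ∉ X}`. -/
def joinCompl (X : Set ℕ) : Set ℕ :=
  {k | ∃ n, (k = 2 * n ∧ n ∈ X) ∨ (k = 2 * n + 1 ∧ n ∉ X)}

/-! ### The λ-calculus -/

/-- Untyped λ-terms (de Bruijn representation). -/
inductive Lam : Type
  | var : ℕ → Lam
  | app : Lam → Lam → Lam
  | abs : Lam → Lam

/-- Lift (shift up) the free variables `≥ d` of a term. -/
def Lam.lift : Lam → ℕ → Lam
  | .var n, d => if n < d then .var n else .var (n + 1)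
  | .app M N, d => .app (M.lift d) (N.lift d)
  | .abs M, d => .abs (M.lift (d + 1))

/-- Substitution `M[k := N]` (de Bruijn). -/
def Lam.subst : Lam → ℕ → Lam → Lam
  | .var n, k, N => if n = k then N else if k < n then .var (n - 1) else .var n
  | .app M M', k, N => .app (M.subst k N) (M'.subst k N)
  | .abs M, k, N => .abs (M.subst (k + 1) (N.lift 0))

/-- β-equivalence of λ-terms. -/
inductive BetaEq : Lam → Lam → Prop
  | beta (M N : Lam) : BetaEq (.app (.abs M) N) (M.subst 0 N)
  | refl (M : Lam) : BetaEq M M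
  | symm {M N : Lam} : BetaEq M N → BetaEq N M
  | trans {M N P : Lam} : BetaEq M N → BetaEq N P → BetaEq M P
  | appCongr {M M' N N' : Lam} :
      BetaEq M M' → BetaEq N N' → BetaEq (.app M N) (.app M' N')
  | absCongr {M M' : Lam} : BetaEq M M' → BetaEq (.abs M) (.abs M')

/-- βη-equivalence of λ-terms. -/
inductive BetaEtaEq : Lam → Lam → Prop
  | beta (M N : Lam) : BetaEtaEq (.app (.abs M) N) (M.subst 0 N)
  | eta (M : Lam) : BetaEtaEq (.abs (.app (M.lift 0) (.var 0))) M
  | refl (M : Lam) : BetaEtaEq M M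
  | symm {M N : Lam} : BetaEtaEq M N → BetaEtaEq N M
  | trans {M N P : Lam} : BetaEtaEq M N → BetaEtaEq N P → BetaEtaEq M P
  | appCongr {M M' N N' : Lam} :
      BetaEtaEq M M' → BetaEtaEq N N' → BetaEtaEq (.app M N) (.app M' N')
  | absCongr {M M' : Lam} : BetaEtaEq M M' → BetaEtaEq (.abs M) (.abs M')

def lamBetaSetoid : Setoid Lam := ⟨BetaEq, ⟨BetaEq.refl, BetaEq.symm, BetaEq.trans⟩⟩

def lamBetaEtaSetoid : Setoid Lam :=
  ⟨BetaEtaEq, ⟨BetaEtaEq.refl, BetaEtaEq.symm, BetaEtaEq.trans⟩⟩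

/-- The pca `λ` of λ-terms modulo β-equivalence. -/
def LamBeta : Type := Quotient lamBetaSetoid

/-- The pca `λη` of λ-terms modulo βη-equivalence. -/
def LamBetaEta : Type := Quotient lamBetaEtaSetoid

/-- Application in `λ` (total). -/
def lamBetaApp : LamBeta → LamBeta → Part LamBeta := fun a b =>
  Part.some (Quotient.map₂ Lam.app (fun _ _ h1 _ _ h2 => BetaEq.appCongr h1 h2) a b)

/-- Application in `λη` (total). -/
def lamBetaEtaApp : LamBetaEta → LamBetaEta → Part LamBetaEta := fun a b =>
  Part.some (Quotient.map₂ Lam.app (fun _ _ h1 _ _ h2 => BetaEtaEq.appCongr h1 h2) a b)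


/-! ### Numbering of codes is onto -/

theorem ofNat_mod0 (i j : ℕ) :
    OCode.ofNat (4 * Nat.pair i j + 5) = .pair (OCode.ofNat i) (OCode.ofNat j) := by
  rw [OCode.ofNat]
  have h1 : (4 * Nat.pair i j) % 4 = 0 := by omega
  have h2 : (4 * Nat.pair i j) / 4 = Nat.pair i j := by omega
  simp [h2]

theorem ofNat_mod1 (i j : ℕ) :
    OCode.ofNat (4 * Nat.pair i j + 1 + 5) = .comp (OCode.ofNat i) (OCode.ofNat j) := by
  rw [OCode.ofNat]
  have h1 : (4 * Nat.pair i j + 1) % 4 = 1 := by omega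
  have h2 : (4 * Nat.pair i j + 1) / 4 = Nat.pair i j := by omega
  simp [h1, h2]

theorem ofNat_mod2 (i j : ℕ) :
    OCode.ofNat (4 * Nat.pair i j + 2 + 5) = .prec (OCode.ofNat i) (OCode.ofNat j) := by
  rw [OCode.ofNat]
  have h1 : (4 * Nat.pair i j + 2) % 4 = 2 := by omega
  have h2 : (4 * Nat.pair i j + 2) / 4 = Nat.pair i j := by omega
  simp [h1, h2]

theorem ofNat_mod3 (i j : ℕ) :
    OCode.ofNat (4 * Nat.pair i j + 3 + 5) = .rfind' (OCode.ofNat i) := by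
  rw [OCode.ofNat]
  have h1 : (4 * Nat.pair i j + 3) % 4 = 3 := by omega
  have h2 : (4 * Nat.pair i j + 3) / 4 = Nat.pair i j := by omega
  simp [h1, h2]

theorem ofNat_surj (c : OCode) : ∃ e, OCode.ofNat e = c := by
  induction c with
  | zero => exact ⟨0, by rw [OCode.ofNat]⟩
  | succ => exact ⟨1, by rw [OCode.ofNat]⟩
  | left => exact ⟨2, by rw [OCode.ofNat]⟩
  | right => exact ⟨3, by rw [OCode.ofNat]⟩
  | oracle => exact ⟨4, by rw [OCode.ofNat]⟩
  | pair a b ha hb =>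
    obtain ⟨i, rfl⟩ := ha; obtain ⟨j, rfl⟩ := hb; exact ⟨_, ofNat_mod0 i j⟩
  | comp a b ha hb =>
    obtain ⟨i, rfl⟩ := ha; obtain ⟨j, rfl⟩ := hb; exact ⟨_, ofNat_mod1 i j⟩
  | prec a b ha hb =>
    obtain ⟨i, rfl⟩ := ha; obtain ⟨j, rfl⟩ := hb; exact ⟨_, ofNat_mod2 i j⟩
  | rfind' a ha =>
    obtain ⟨i, rfl⟩ := ha; exact ⟨_, ofNat_mod3 i 0⟩

/-! ### Membership lemmas -/

theorem mem_pair {O : ℕ →. ℕ} {a b : OCode} {n v : ℕ} :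
    v ∈ evalo O (.pair a b) n ↔ ∃ x ∈ evalo O a n, ∃ y ∈ evalo O b n, Nat.pair x y = v := by
  simp [evalo, Seq.seq]

theorem mem_comp {O : ℕ →. ℕ} {a b : OCode} {n v : ℕ} :
    v ∈ evalo O (.comp a b) n ↔ ∃ x ∈ evalo O b n, v ∈ evalo O a x := by
  simp only [evalo]
  exact Part.mem_bind_iff

theorem comp_eq {O : ℕ →. ℕ} {a b : OCode} {n x : ℕ} (h : x ∈ evalo O b n) :
    evalo O (.comp a b) n = evalo O a x := by
  refine Part.ext fun v => mem_comp.trans ⟨?_, fun hv => ⟨x, h, hv⟩⟩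
  rintro ⟨y, hy, hv⟩
  rwa [Part.mem_unique h hy]

theorem mem_prec_zero {O : ℕ →. ℕ} {a b : OCode} {n v : ℕ} :
    v ∈ evalo O (.prec a b) (Nat.pair n 0) ↔ v ∈ evalo O a n := by
  simp [evalo]

theorem mem_prec_succ {O : ℕ →. ℕ} {a b : OCode} {n k v : ℕ} :
    v ∈ evalo O (.prec a b) (Nat.pair n (k + 1)) ↔
      ∃ i ∈ evalo O (.prec a b) (Nat.pair n k), v ∈ evalo O b (Nat.pair n (Nat.pair k i)) := by
  simp [evalo]

theorem mem_rfind' {O : ℕ →. ℕ} {a : OCode} {n m v : ℕ} :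
    v ∈ evalo O (.rfind' a) (Nat.pair n m) ↔
      ∃ k, (0 ∈ evalo O a (Nat.pair n (k + m)) ∧
        ∀ j < k, ∃ x ∈ evalo O a (Nat.pair n (j + m)), x ≠ 0) ∧ k + m = v := by
  simp only [evalo, Nat.unpaired, Nat.unpair_pair, Part.mem_map_iff]
  refine exists_congr fun k => and_congr_left' ?_
  refine Nat.mem_rfind.trans ?_
  refine and_congr ?_ (forall_congr' fun j => forall_congr' fun _ => ?_)
  · refine (Part.mem_map_iff _).trans ?_
    simp
  · refine (Part.mem_map_iff _).trans ?_
    simp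

/-! ### Monotonicity and compactness -/

theorem evalo_mono {O O' : ℕ →. ℕ} (h : ∀ n v, v ∈ O n → v ∈ O' n) (c : OCode) :
    ∀ n v, v ∈ evalo O c n → v ∈ evalo O' c n := by
  induction c with
  | zero => exact fun n v h => h
  | succ => exact fun n v h => h
  | left => exact fun n v h => h
  | right => exact fun n v h => h
  | oracle => exact h
  | pair a b ha hb =>
    intro n v
    rw [mem_pair, mem_pair]
    rintro ⟨x, hx, y, hy, e⟩
    exact ⟨x, ha _ _ hx, y, hb _ _ hy, e⟩
  | comp a b ha hb =>
    intro n v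
    rw [mem_comp, mem_comp]
    rintro ⟨x, hx, hy⟩
    exact ⟨x, hb _ _ hx, ha _ _ hy⟩
  | prec a b ha hb =>
    intro n
    obtain ⟨n, k, rfl⟩ : ∃ a b, n = Nat.pair a b := ⟨_, _, (Nat.pair_unpair n).symm⟩
    induction k with
    | zero => intro v; rw [mem_prec_zero, mem_prec_zero]; exact ha _ _
    | succ k ih =>
      intro v; rw [mem_prec_succ, mem_prec_succ]
      rintro ⟨x, hx, hy⟩
      exact ⟨x, ih _ hx, hb _ _ hy⟩
  | rfind' a ha =>
    intro n v
    obtain ⟨n, k, rfl⟩ : ∃ a b, n = Nat.pair a b := ⟨_, _, (Nat.pair_unpair n).symm⟩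
    rw [mem_rfind', mem_rfind']
    rintro ⟨k, ⟨h0, h1⟩, e⟩
    refine ⟨k, ⟨ha _ _ h0, fun j hj => ?_⟩, e⟩
    obtain ⟨x, hx, hne⟩ := h1 j hj
    exact ⟨x, ha _ _ hx, hne⟩

open Filter in
theorem evalo_compact {O : ℕ →. ℕ} {F : ℕ → ℕ →. ℕ}
    (h : ∀ n v, v ∈ O n → ∀ᶠ s in atTop, v ∈ F s n) (c : OCode) :
    ∀ n v, v ∈ evalo O c n → ∀ᶠ s in atTop, v ∈ evalo (F s) c n := by
  induction c with
  | zero => exact fun n v h => Eventually.of_forall fun _ => h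
  | succ => exact fun n v h => Eventually.of_forall fun _ => h
  | left => exact fun n v h => Eventually.of_forall fun _ => h
  | right => exact fun n v h => Eventually.of_forall fun _ => h
  | oracle => exact h
  | pair a b ha hb =>
    intro n v
    simp only [mem_pair]
    rintro ⟨x, hx, y, hy, e⟩
    filter_upwards [ha _ _ hx, hb _ _ hy] with s h1 h2
    exact ⟨x, h1, y, h2, e⟩
  | comp a b ha hb =>
    intro n v
    simp only [mem_comp]
    rintro ⟨x, hx, hy⟩
    filter_upwards [ha _ _ hy, hb _ _ hx] with s h1 h2
    exact ⟨x, h2, h1⟩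
  | prec a b ha hb =>
    intro n
    obtain ⟨n, k, rfl⟩ : ∃ a b, n = Nat.pair a b := ⟨_, _, (Nat.pair_unpair n).symm⟩
    induction k with
    | zero => intro v; simp only [mem_prec_zero]; exact ha _ _
    | succ k ih =>
      intro v; simp only [mem_prec_succ]
      rintro ⟨x, hx, hy⟩
      filter_upwards [ih _ hx, hb _ _ hy] with s h1 h2
      exact ⟨x, h1, h2⟩
  | rfind' a ha =>
    intro n v
    obtain ⟨n, l, rfl⟩ : ∃ a b, n = Nat.pair a b := ⟨_, _, (Nat.pair_unpair n).symm⟩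
    simp only [mem_rfind']
    rintro ⟨k, ⟨h0, h1⟩, e⟩
    have h2 : ∀ᶠ s in atTop, ∀ j ∈ Set.Iio k,
        ∃ x ∈ evalo (F s) a (Nat.pair n (j + l)), x ≠ 0 := by
      rw [Filter.eventually_all_finite (Set.finite_Iio k)]
      intro j hj
      obtain ⟨x, hx, hne⟩ := h1 j hj
      filter_upwards [ha _ _ hx] with s h
      exact ⟨x, h, hne⟩
    filter_upwards [ha _ _ h0, h2] with s h3 h4
    exact ⟨k, ⟨h3, h4⟩, e⟩

/-! ### A universal code for finite oracles -/

/-- The finite oracle coded by `σ`. -/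
def look (σ n : ℕ) : Part ℕ :=
  Part.ofOption (((Encodable.decode (α := List ℕ) σ).getD [])[n]?)

/-- The recursion equation of the evaluator with finite oracle, `call` being the recursive call. -/
def body (call : ℕ → Part ℕ) (σ e n : ℕ) : Part ℕ :=
  bif e == 0 then Part.some 0 else
  bif e == 1 then Part.some (n + 1) else
  bif e == 2 then Part.some n.unpair.1 else
  bif e == 3 then Part.some n.unpair.2 else
  bif e == 4 then look σ n else
  bif (e - 5) % 4 == 0 then
    (call (Nat.pair σ (Nat.pair ((e - 5) / 4).unpair.1 n))).bind fun x =>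
      (call (Nat.pair σ (Nat.pair ((e - 5) / 4).unpair.2 n))).map fun y => Nat.pair x y else
  bif (e - 5) % 4 == 1 then
    (call (Nat.pair σ (Nat.pair ((e - 5) / 4).unpair.2 n))).bind fun x =>
      call (Nat.pair σ (Nat.pair ((e - 5) / 4).unpair.1 x)) else
  bif (e - 5) % 4 == 2 then
    Nat.rec (call (Nat.pair σ (Nat.pair ((e - 5) / 4).unpair.1 n.unpair.1)))
      (fun y IH => IH.bind fun i => call (Nat.pair σ (Nat.pair ((e - 5) / 4).unpair.2
        (Nat.pair n.unpair.1 (Nat.pair y i))))) n.unpair.2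
  else
    (Nat.rfind fun k => (call (Nat.pair σ (Nat.pair ((e - 5) / 4).unpair.1
        (Nat.pair n.unpair.1 (k + n.unpair.2))))).map fun x => x == 0).map
      fun k => k + n.unpair.2

theorem body_part : Partrec₂ fun (c : Nat.Partrec.Code) (x : ℕ) =>
    body c.eval x.unpair.1 x.unpair.2.unpair.1 x.unpair.2.unpair.2 := by
  have up1 : Computable fun n : ℕ => n.unpair.1 := (Primrec.fst.comp Primrec.unpair).to_comp
  have up2 : Computable fun n : ℕ => n.unpair.2 := (Primrec.snd.comp Primrec.unpair).to_comp
  have X : Computable fun p : Nat.Partrec.Code × ℕ => p.2 := Computable.snd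
  have hs : Computable fun p : Nat.Partrec.Code × ℕ => p.2.unpair.1 := up1.comp X
  have he : Computable fun p : Nat.Partrec.Code × ℕ => p.2.unpair.2.unpair.1 :=
    up1.comp (up2.comp X)
  have hn : Computable fun p : Nat.Partrec.Code × ℕ => p.2.unpair.2.unpair.2 :=
    up2.comp (up2.comp X)
  have hm : Primrec fun e : ℕ => e - 5 := Primrec.nat_sub.comp Primrec.id (Primrec.const 5)
  have hmod : Computable fun e : ℕ => (e - 5) % 4 :=
    (Primrec.nat_mod.comp hm (Primrec.const 4)).to_comp
  have hdiv : Computable fun e : ℕ => (e - 5) / 4 :=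
    (Primrec.nat_div.comp hm (Primrec.const 4)).to_comp
  have hi : Computable fun p : Nat.Partrec.Code × ℕ =>
      ((p.2.unpair.2.unpair.1 - 5) / 4).unpair.1 := up1.comp (hdiv.comp he)
  have hj : Computable fun p : Nat.Partrec.Code × ℕ =>
      ((p.2.unpair.2.unpair.1 - 5) / 4).unpair.2 := up2.comp (hdiv.comp he)
  have beq : ∀ k : ℕ, Computable fun n : ℕ => n == k := fun k =>
    (Primrec.beq.comp Primrec.id (Primrec.const k)).to_comp
  have pr : Computable₂ Nat.pair := Primrec₂.natPair.to_comp
  have ev := Nat.Partrec.Code.eval_part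
  unfold body look
  refine Partrec.cond ((beq 0).comp he) (Computable.const 0) ?_
  refine Partrec.cond ((beq 1).comp he) (Computable.succ.comp hn) ?_
  refine Partrec.cond ((beq 2).comp he) (up1.comp hn) ?_
  refine Partrec.cond ((beq 3).comp he) (up2.comp hn) ?_
  refine Partrec.cond ((beq 4).comp he) ?_ ?_
  · refine Computable.ofOption ?_
    refine Primrec.list_getElem?.to_comp.comp ?_ hn
    exact Computable.option_getD (Computable.decode.comp hs) (Computable.const [])
  refine Partrec.cond ((beq 0).comp (hmod.comp he)) ?_ ?_
  · refine Partrec.bind (ev.comp Computable.fst (pr.comp hs (pr.comp hi hn))) ?_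
    refine Partrec.map ((ev.comp Computable.fst (pr.comp hs (pr.comp hj hn))).comp
      Computable.fst) ?_
    exact pr.comp (Computable.snd.comp Computable.fst) Computable.snd
  refine Partrec.cond ((beq 1).comp (hmod.comp he)) ?_ ?_
  · refine Partrec.bind (ev.comp Computable.fst (pr.comp hs (pr.comp hj hn))) ?_
    exact ev.comp (Computable.fst.comp Computable.fst)
      (pr.comp (hs.comp Computable.fst) (pr.comp (hi.comp Computable.fst) Computable.snd))
  refine Partrec.cond ((beq 2).comp (hmod.comp he)) ?_ ?_
  · refine Partrec.nat_rec (h := fun (p : Nat.Partrec.Code × ℕ) (q : ℕ × ℕ) =>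
      p.1.eval (Nat.pair p.2.unpair.1 (Nat.pair ((p.2.unpair.2.unpair.1 - 5) / 4).unpair.2
        (Nat.pair p.2.unpair.2.unpair.2.unpair.1 (Nat.pair q.1 q.2)))))
      (up2.comp hn)
      (ev.comp Computable.fst (pr.comp hs (pr.comp hi (up1.comp hn)))) ?_
    exact ev.comp (Computable.fst.comp Computable.fst)
      (pr.comp (hs.comp Computable.fst) (pr.comp (hj.comp Computable.fst)
        (pr.comp ((up1.comp hn).comp Computable.fst)
          (pr.comp (Computable.fst.comp Computable.snd) (Computable.snd.comp Computable.snd)))))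
  · have hplus : Computable₂ fun a b : ℕ => a + b := Primrec.nat_add.to_comp
    refine Partrec.map (Partrec.rfind ?_) ?_
    · refine Partrec.map (ev.comp (Computable.fst.comp Computable.fst)
        (pr.comp (hs.comp Computable.fst) (pr.comp (hi.comp Computable.fst)
        (pr.comp ((up1.comp hn).comp Computable.fst)
          (hplus.comp Computable.snd ((up2.comp hn).comp Computable.fst)))))) ?_
      exact (beq 0).comp Computable.snd
    · exact hplus.comp Computable.snd ((up2.comp hn).comp Computable.fst)

theorem exists_finite_univ : ∃ c : Nat.Partrec.Code, ∀ σ e n,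
    c.eval (Nat.pair σ (Nat.pair e n)) = evalo (look σ) (OCode.ofNat e) n := by
  obtain ⟨c, hc⟩ := Nat.Partrec.Code.fixed_point₂ body_part
  have key : ∀ σ e n, c.eval (Nat.pair σ (Nat.pair e n)) = body c.eval σ e n := by
    intro σ e n
    conv_lhs => rw [hc]
    simp
  refine ⟨c, fun σ e => ?_⟩
  induction e using Nat.strong_induction_on with
  | _ e ih =>
  intro n
  rw [key]
  match e, ih with
  | 0, _ => simp [body, OCode.ofNat, evalo]; rfl
  | 1, _ => simp [body, OCode.ofNat, evalo]
  | 2, _ => simp [body, OCode.ofNat, evalo]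
  | 3, _ => simp [body, OCode.ofNat, evalo]
  | 4, _ => simp [body, OCode.ofNat, evalo]
  | m + 5, ih =>
    have h1 := Nat.unpair_left_le (m / 4)
    have h2 := Nat.unpair_right_le (m / 4)
    have h3 := Nat.div_le_self m 4
    have hi := ih (m / 4).unpair.1 (by omega)
    have hj := ih (m / 4).unpair.2 (by omega)
    have h4 : m % 4 < 4 := Nat.mod_lt _ (by norm_num)
    rw [OCode.ofNat]
    unfold body
    simp only [Nat.add_sub_cancel, hi, hj]
    interval_cases hh : m % 4
    · simp [evalo, Seq.seq]
    · simp only [evalo]; rfl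
    · simp [evalo]
    · simp [evalo, Nat.unpaired]
      rfl

/-! ### Closure properties -/

/-- Oracle-free codes as oracle codes. -/
def ofCode : Nat.Partrec.Code → OCode
  | .zero => .zero
  | .succ => .succ
  | .left => .left
  | .right => .right
  | .pair a b => .pair (ofCode a) (ofCode b)
  | .comp a b => .comp (ofCode a) (ofCode b)
  | .prec a b => .prec (ofCode a) (ofCode b)
  | .rfind' a => .rfind' (ofCode a)

theorem evalo_ofCode (O : ℕ →. ℕ) (c : Nat.Partrec.Code) : evalo O (ofCode c) = c.eval := by
  induction c with
  | zero => rfl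
  | succ => rfl
  | left => rfl
  | right => rfl
  | pair a b ha hb => simp only [ofCode, evalo, Nat.Partrec.Code.eval, ha, hb]; rfl
  | comp a b ha hb => simp only [ofCode, evalo, Nat.Partrec.Code.eval, ha, hb]; rfl
  | prec a b ha hb => simp only [ofCode, evalo, Nat.Partrec.Code.eval, ha, hb]; rfl
  | rfind' a ha => simp only [ofCode, evalo, Nat.Partrec.Code.eval, ha]; rfl

theorem of_partrec {f : ℕ →. ℕ} (h : Nat.Partrec f) : ∃ c, ∀ O, evalo O c = f := by
  obtain ⟨c, rfl⟩ := Nat.Partrec.Code.exists_code.1 h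
  exact ⟨ofCode c, fun O => evalo_ofCode O c⟩

theorem of_primrec {f : ℕ → ℕ} (h : Primrec f) : ∃ c, ∀ O, evalo O c = toPFun f :=
  of_partrec (Nat.Partrec.of_primrec (Primrec.nat_iff.1 h))

/-- `f` is a total function computable in the oracle `O`. -/
def TC (O : ℕ →. ℕ) (f : ℕ → ℕ) : Prop := ∃ c, ∀ n, f n ∈ evalo O c n

theorem TC.rec {O : ℕ →. ℕ} {f : ℕ → ℕ} (h : TC O f) : RecursiveIn O (toPFun f) := by
  obtain ⟨c, hc⟩ := h
  exact ⟨c, funext fun n => Part.eq_some_iff.2 (hc n)⟩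

theorem TC.prim {O : ℕ →. ℕ} {f : ℕ → ℕ} (h : Primrec f) : TC O f := by
  obtain ⟨c, hc⟩ := of_primrec h
  exact ⟨c, fun n => by rw [hc]; exact Part.mem_some _⟩

theorem TC.pair {O : ℕ →. ℕ} {f g : ℕ → ℕ} (hf : TC O f) (hg : TC O g) :
    TC O fun n => Nat.pair (f n) (g n) := by
  obtain ⟨c, hc⟩ := hf
  obtain ⟨d, hd⟩ := hg
  exact ⟨.pair c d, fun n => mem_pair.2 ⟨_, hc n, _, hd n, rfl⟩⟩

theorem TC.comp {O : ℕ →. ℕ} {f g : ℕ → ℕ} (hf : TC O f) (hg : TC O g) :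
    TC O fun n => f (g n) := by
  obtain ⟨c, hc⟩ := hf
  obtain ⟨d, hd⟩ := hg
  exact ⟨.comp c d, fun n => mem_comp.2 ⟨_, hd n, hc _⟩⟩

theorem TC.oracle (g : ℕ → ℕ) : TC (toPFun g) g := ⟨.oracle, fun _ => Part.mem_some _⟩

/-- The code of the initial segment of `g` of length `s`. -/
def seg (g : ℕ → ℕ) (s : ℕ) : ℕ := Encodable.encode ((List.range s).map g)

/-- Appending an entry to a coded list. -/
def snoc (i v : ℕ) : ℕ :=
  Encodable.encode (((Encodable.decode (α := List ℕ) i).getD []) ++ [v])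

theorem snoc_prim : Primrec₂ snoc := by
  refine Primrec.encode.comp (Primrec.list_concat.comp ?_ Primrec.snd)
  exact Primrec.option_getD.comp (Primrec.decode.comp Primrec.fst) (Primrec.const [])

theorem seg_succ (g : ℕ → ℕ) (s : ℕ) : seg g (s + 1) = snoc (seg g s) (g s) := by
  simp [seg, snoc, List.range_succ]

theorem up1 : Primrec fun n : ℕ => n.unpair.1 := Primrec.fst.comp Primrec.unpair

theorem up2 : Primrec fun n : ℕ => n.unpair.2 := Primrec.snd.comp Primrec.unpair

theorem seg_TC (g : ℕ → ℕ) : TC (toPFun g) (seg g) := by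
  have h1 : TC (toPFun g) fun x =>
      (fun z : ℕ => snoc z.unpair.1 z.unpair.2)
        (Nat.pair x.unpair.2.unpair.2 (g x.unpair.2.unpair.1)) :=
    TC.comp (TC.prim (snoc_prim.comp up1 up2))
      (TC.pair (TC.prim (up2.comp up2)) (TC.comp (TC.oracle g) (TC.prim (up1.comp up2))))
  obtain ⟨c, hc⟩ := h1
  obtain ⟨z, hz⟩ := TC.prim (O := toPFun g) (Primrec.const (seg g 0))
  obtain ⟨i, hi⟩ := TC.prim (O := toPFun g)
    (Primrec₂.natPair.comp (Primrec.const 0) Primrec.id)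
  refine ⟨.comp (.prec z c) i, fun n => mem_comp.2 ⟨_, hi n, ?_⟩⟩
  simp only [id]
  induction n with
  | zero => exact mem_prec_zero.2 (hz _)
  | succ n ih =>
    refine mem_prec_succ.2 ⟨_, ih, ?_⟩
    have := hc (Nat.pair 0 (Nat.pair n (seg g n)))
    simpa [seg_succ] using this

theorem look_seg (g : ℕ → ℕ) (s n v : ℕ) : v ∈ look (seg g s) n ↔ n < s ∧ g n = v := by
  simp only [look, seg, Encodable.encodek, Option.getD_some, Part.mem_ofOption]
  by_cases h : n < s <;> simp [h]

/-- Universal code. -/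
theorem exists_univ (g : ℕ → ℕ) : ∃ u, ∀ e n,
    evalo (toPFun g) u (Nat.pair e n) = evalo (toPFun g) (OCode.ofNat e) n := by
  obtain ⟨E, hE⟩ := exists_finite_univ
  let q : ℕ → ℕ := fun z => Encodable.encode
    (Nat.Partrec.Code.evaln z.unpair.2.unpair.1 E
      (Nat.pair (seg g z.unpair.2.unpair.2) z.unpair.1))
  have hq : TC (toPFun g) q := by
    have h1 : Primrec fun w : ℕ => Encodable.encode
        (Nat.Partrec.Code.evaln w.unpair.1 E w.unpair.2) :=
      Primrec.encode.comp (Nat.Partrec.Code.primrec_evaln.comp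
        (Primrec.pair (Primrec.pair up1 (Primrec.const E)) up2))
    have h2 := TC.comp (O := toPFun g) (TC.prim h1) (TC.pair (TC.prim (up1.comp up2))
      (TC.pair (TC.comp (seg_TC g) (TC.prim (up2.comp up2))) (TC.prim up1)))
    simpa only [Nat.unpair_pair] using h2
  have ht : TC (toPFun g) fun z => 1 - q z :=
    TC.comp (TC.prim (Primrec.nat_sub.comp (Primrec.const 1) Primrec.id)) hq
  have ho : TC (toPFun g) fun z => q z - 1 :=
    TC.comp (TC.prim (Primrec.nat_sub.comp Primrec.id (Primrec.const 1))) hq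
  obtain ⟨t, ht⟩ := ht
  obtain ⟨o, ho⟩ := ho
  obtain ⟨i, hi⟩ := TC.prim (O := toPFun g) Primrec.id
  obtain ⟨i0, hi0⟩ := TC.prim (O := toPFun g)
    (Primrec₂.natPair.comp Primrec.id (Primrec.const 0))
  refine ⟨.comp o (.pair i (.comp (.rfind' t) i0)), fun e n => ?_⟩
  have qs : ∀ x s v : ℕ, q (Nat.pair x s) = v + 1 ↔
      v ∈ Nat.Partrec.Code.evaln s.unpair.1 E (Nat.pair (seg g s.unpair.2) x) := by
    intro x s v
    simp only [q, Nat.unpair_pair]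
    cases Nat.Partrec.Code.evaln s.unpair.1 E (Nat.pair (seg g s.unpair.2) x) <;> simp [eq_comm]
  have sound : ∀ s v : ℕ, v ∈ Nat.Partrec.Code.evaln s.unpair.1 E (Nat.pair (seg g s.unpair.2) (Nat.pair e n)) →
      v ∈ evalo (toPFun g) (OCode.ofNat e) n := by
    intro s v h
    have h1 := Nat.Partrec.Code.evaln_sound h
    rw [hE] at h1
    refine evalo_mono ?_ _ _ _ h1
    intro a b hab
    rw [look_seg] at hab
    rw [← hab.2]
    exact Part.mem_some _
  have uniq : ∀ {c : OCode} {m a b : ℕ}, a ∈ evalo (toPFun g) c m →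
      b ∈ evalo (toPFun g) c m → a = b := fun h1 h2 => Part.mem_unique h1 h2
  ext v
  rw [mem_comp]
  constructor
  · rintro ⟨p, hp, hv⟩
    obtain ⟨x, hx, s, hs, rfl⟩ := mem_pair.1 hp
    obtain rfl := uniq hx (hi _)
    obtain ⟨y, hy, hs⟩ := mem_comp.1 hs
    obtain rfl := uniq hy (hi0 _)
    simp only [id] at *
    obtain ⟨k, ⟨h0, -⟩, rfl⟩ := mem_rfind'.1 hs
    rw [Nat.add_zero] at *
    have h1 := uniq h0 (ht _)
    have h2 := uniq hv (ho _)
    refine sound k v ((qs _ _ _).1 ?_)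
    omega
  · intro hv
    have hc : ∀ᶠ s in Filter.atTop, v ∈ evalo (look (seg g s)) (OCode.ofNat e) n := by
      refine evalo_compact (O := toPFun g) (F := fun s => look (seg g s)) ?_ _ _ _ hv
      intro a b hab
      obtain rfl : b = g a := by simpa [toPFun] using hab
      filter_upwards [Filter.eventually_gt_atTop a] with s hs
      exact (look_seg _ _ _ _).2 ⟨hs, rfl⟩
    obtain ⟨s, hs⟩ := hc.exists
    rw [← hE, Nat.Partrec.Code.evaln_complete] at hs
    obtain ⟨k, hk⟩ := hs
    have hex : ∃ s, q (Nat.pair (Nat.pair e n) s) ≠ 0 := by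
      refine ⟨Nat.pair k s, ?_⟩
      rw [(qs _ _ v).2 (by simpa using hk)]
      omega
    classical
    have hpos := Nat.find_spec hex
    have hmin : ∀ j < Nat.find hex, q (Nat.pair (Nat.pair e n) j) = 0 := fun j hj =>
      not_not.1 (Nat.find_min hex hj)
    generalize Nat.find hex = r at hpos hmin
    have hval : q (Nat.pair (Nat.pair e n) r) = v + 1 := by
      obtain ⟨w, hw⟩ := Nat.exists_eq_succ_of_ne_zero hpos
      rw [hw, uniq hv (sound _ _ ((qs _ _ _).1 hw))]
    refine ⟨Nat.pair (Nat.pair e n) r, mem_pair.2 ⟨_, hi _, r, mem_comp.2 ⟨_, hi0 _, ?_⟩, rfl⟩, ?_⟩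
    · refine mem_rfind'.2 ⟨r, ⟨?_, fun j hj => ⟨_, ht _, ?_⟩⟩, rfl⟩
      · have := ht (Nat.pair (Nat.pair e n) r)
        simp only [hval] at this
        simpa using this
      · simp [hmin j hj]
    · have := ho (Nat.pair (Nat.pair e n) r)
      simp only [hval] at this
      simpa using this

/-! ### Substitution on indices -/

/-- An index of the constant code. -/
def kIdx (i : ℕ) : ℕ := Nat.rec 0 (fun _ r => 4 * Nat.pair 1 r + 1 + 5) i

theorem kIdx_prim : Primrec kIdx := by
  have h : Primrec₂ fun (_ : ℕ) (r : ℕ) => 4 * Nat.pair 1 r + 1 + 5 :=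
    Primrec.nat_add.comp (Primrec.nat_add.comp (Primrec.nat_mul.comp (Primrec.const 4)
      (Primrec₂.natPair.comp (Primrec.const 1) Primrec.snd)) (Primrec.const 1)) (Primrec.const 5)
  exact Primrec.nat_rec₁ 0 h

theorem kIdx_eval (O : ℕ →. ℕ) (i n : ℕ) : i ∈ evalo O (OCode.ofNat (kIdx i)) n := by
  induction i with
  | zero =>
    show 0 ∈ evalo O (OCode.ofNat 0) n
    rw [OCode.ofNat]; exact Part.mem_some _
  | succ i ih =>
    show i + 1 ∈ evalo O (OCode.ofNat (4 * Nat.pair 1 (kIdx i) + 1 + 5)) n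
    rw [ofNat_mod1]
    refine mem_comp.2 ⟨i, ih, ?_⟩
    rw [OCode.ofNat]; exact Part.mem_some _

theorem exists_subst (g : ℕ → ℕ) (ia : ℕ) (c : OCode) : ∃ s : ℕ → ℕ, Primrec s ∧
    ∀ i, evalo (toPFun g) (OCode.ofNat (s i)) =
      evalo (pjoin (evalo (toPFun g) (OCode.ofNat ia)) (evalo (toPFun g) (OCode.ofNat i))) c := by
  have mk : ∀ (k : ℕ) {s t : ℕ → ℕ}, Primrec s → Primrec t →
      Primrec fun i => 4 * Nat.pair (s i) (t i) + k + 5 := fun k s t hs ht =>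
    Primrec.nat_add.comp (Primrec.nat_add.comp (Primrec.nat_mul.comp (Primrec.const 4)
      (Primrec₂.natPair.comp hs ht)) (Primrec.const k)) (Primrec.const 5)
  induction c with
  | zero => exact ⟨fun _ => 0, Primrec.const _, fun i => by rw [OCode.ofNat]; rfl⟩
  | succ => exact ⟨fun _ => 1, Primrec.const _, fun i => by rw [OCode.ofNat]; rfl⟩
  | left => exact ⟨fun _ => 2, Primrec.const _, fun i => by rw [OCode.ofNat]; rfl⟩
  | right => exact ⟨fun _ => 3, Primrec.const _, fun i => by rw [OCode.ofNat]; rfl⟩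
  | pair a b ha hb =>
    obtain ⟨s, hs, hs'⟩ := ha
    obtain ⟨t, ht, ht'⟩ := hb
    exact ⟨_, mk 0 hs ht, fun i => by
      rw [Nat.add_zero, ofNat_mod0]; simp only [evalo, hs', ht']; rfl⟩
  | comp a b ha hb =>
    obtain ⟨s, hs, hs'⟩ := ha
    obtain ⟨t, ht, ht'⟩ := hb
    exact ⟨_, mk 1 hs ht, fun i => by rw [ofNat_mod1]; simp only [evalo, hs', ht']; rfl⟩
  | prec a b ha hb =>
    obtain ⟨s, hs, hs'⟩ := ha
    obtain ⟨t, ht, ht'⟩ := hb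
    exact ⟨_, mk 2 hs ht, fun i => by rw [ofNat_mod2]; simp only [evalo, hs', ht']; rfl⟩
  | rfind' a ha =>
    obtain ⟨s, hs, hs'⟩ := ha
    exact ⟨_, mk 3 hs hs, fun i => by rw [ofNat_mod3]; simp only [evalo, hs']; rfl⟩
  | oracle =>
    obtain ⟨u, hu⟩ := exists_univ g
    obtain ⟨iu, rfl⟩ := ofNat_surj u
    have hw : Primrec fun z : ℕ =>
        Nat.pair (if z.unpair.2 % 2 = 0 then ia else z.unpair.1) (z.unpair.2 / 2) :=
      Primrec₂.natPair.comp (Primrec.ite (Primrec.eq.comp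
        (Primrec.nat_mod.comp up2 (Primrec.const 2)) (Primrec.const 0)) (Primrec.const ia) up1)
        (Primrec.nat_div.comp up2 (Primrec.const 2))
    obtain ⟨w, hw⟩ := of_primrec hw
    obtain ⟨iw, rfl⟩ := ofNat_surj w
    obtain ⟨d, hd⟩ := of_primrec Primrec.id
    obtain ⟨id', rfl⟩ := ofNat_surj d
    refine ⟨_, mk 1 (Primrec.const iu) (mk 1 (Primrec.const iw)
      (mk 0 kIdx_prim (Primrec.const id'))), fun i => ?_⟩
    rw [ofNat_mod1, ofNat_mod1, Nat.add_zero, ofNat_mod0]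
    funext n
    have h1 : Nat.pair i n ∈ evalo (toPFun g)
        (.pair (OCode.ofNat (kIdx i)) (OCode.ofNat id')) n :=
      mem_pair.2 ⟨i, kIdx_eval _ _ _, n, by rw [hd]; exact Part.mem_some _, rfl⟩
    have h2 : Nat.pair (if n % 2 = 0 then ia else i) (n / 2) ∈ evalo (toPFun g)
        (.comp (OCode.ofNat iw) (.pair (OCode.ofNat (kIdx i)) (OCode.ofNat id'))) n := by
      refine mem_comp.2 ⟨_, h1, ?_⟩
      rw [hw]
      simp [toPFun]
    rw [comp_eq h2, hu]
    show _ = pjoin _ _ n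
    unfold pjoin
    split_ifs <;> rfl

/-! ### Jump is not computable -/

theorem jump_not_le (X : Set ℕ) : ¬ TuringLE (jump X) X := by
  rintro ⟨c, hc⟩
  obtain ⟨i, hi⟩ := of_primrec (Primrec₂.natPair.comp Primrec.id (Primrec.const 0))
  obtain ⟨e, he⟩ := ofNat_surj (.comp (.rfind' (.comp c .left)) i)
  have hl : ∀ n k v, v ∈ evalo (chi X) (.comp c .left) (Nat.pair n k) ↔ v ∈ chi (jump X) n := by
    intro n k v
    rw [mem_comp, hc]
    simp [evalo]
  have key : e ∈ jump X ↔ 0 ∈ chi (jump X) e := by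
    show (phi (chi X) e e).Dom ↔ _
    rw [phi, he, Part.dom_iff_mem]
    simp only [mem_comp, hi]
    constructor
    · rintro ⟨y, x, hx, hy⟩
      obtain rfl : x = Nat.pair e 0 := by simpa [toPFun] using hx
      obtain ⟨k, ⟨h0, -⟩, -⟩ := mem_rfind'.1 hy
      exact (hl _ _ _).1 h0
    · intro h
      refine ⟨0, Nat.pair e 0, Part.mem_some _, mem_rfind'.2 ⟨0, ⟨(hl _ _ _).2 h, ?_⟩, rfl⟩⟩
      simp
  by_cases h : e ∈ jump X
  · have := key.1 h
    simp [chi, h] at this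
  · exact h (key.2 (by simp [chi, h]))

/-! ### Application in the two models -/

theorem bXApp_mem {X : Set ℕ} {a b c : Bel X}
    (h : c.1 = fun n => (a.1 0).bind fun e => phi (pjoin a.1 b.1) e n) : c ∈ bXApp X a b := by
  obtain ⟨c, hc⟩ := c
  simp only at h
  subst h
  unfold bXApp subApp bApp
  exact Part.mem_bind (Part.mem_some _) (Part.mem_assert hc (Part.mem_some _))

theorem k2XApp_mem {Y : Set ℕ} {a b c : K2el Y} (h : c ∈ k2XApp Y a b) :
    toPFun c.1 = evalo (pjoin (toPFun a.1) (toPFun b.1)) (OCode.ofNat (a.1 0)) := by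
  unfold k2XApp subApp at h
  obtain ⟨d, hd, h⟩ := Part.mem_bind_iff.1 h
  obtain ⟨hp, h⟩ := Part.mem_assert_iff.1 h
  obtain rfl := Part.mem_some_iff.1 h
  obtain ⟨hdom, rfl⟩ := hd
  funext n
  exact (Part.eq_some_iff.2 (Part.get_mem (hdom n))).symm

/-- Numerals. -/
noncomputable def num (X : Set ℕ) (n : ℕ) : Bel X :=
  ⟨toPFun fun _ => n, (TC.prim (Primrec.const n)).rec⟩

theorem main1 (X Y : Set ℕ) (f : Bel X → K2el Y)
    (hf : IsPCAEmbedding (bXApp X) (k2XApp Y) f) : TuringLE (jump X) Y := by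
  obtain ⟨inj, hom⟩ := hf
  -- the elements of `B^X`
  obtain ⟨eS, heS⟩ := ofNat_surj (.comp .succ (.comp .oracle (.comp .succ .zero)))
  have hS : ∀ n, num X (n + 1) ∈ bXApp X (num X eS) (num X n) := by
    intro n
    apply bXApp_mem
    funext x
    symm
    simp only [num, toPFun, Part.bind_some, phi, heS]
    refine Part.eq_some_iff.2 (mem_comp.2 ⟨n, mem_comp.2 ⟨1, mem_comp.2 ⟨0, ?_, ?_⟩, ?_⟩, ?_⟩)
    · exact Part.mem_some _
    · exact Part.mem_some _
    · simp [evalo, pjoin, toPFun]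
    · exact Part.mem_some _
  obtain ⟨none', hnone⟩ := of_partrec Nat.Partrec.none
  let bot : Bel X := ⟨fun _ => Part.none, none', hnone _⟩
  obtain ⟨w, hw⟩ := of_primrec (Primrec.nat_mul.comp (Primrec.const 2) Primrec.succ)
  obtain ⟨eD, heD⟩ := ofNat_surj (.comp .oracle (.comp w (.comp .oracle (.comp .succ .zero))))
  have hD : ∃ θ : Bel X, θ.1 0 = Part.some eD ∧
      ∀ n, θ.1 (n + 1) = evalo (chi X) (.comp .zero (OCode.ofNat n)) n := by
    obtain ⟨u, hu⟩ := exists_univ (X.indicator fun _ => 1)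
    have hh : Primrec fun x : ℕ => Nat.pair
        (if x = 0 then kIdx eD else 4 * Nat.pair 0 (x - 1) + 1 + 5) (x - 1) := by
      have hp : Primrec fun x : ℕ => x - 1 := Primrec.nat_sub.comp Primrec.id (Primrec.const 1)
      refine Primrec₂.natPair.comp (Primrec.ite (Primrec.eq.comp Primrec.id (Primrec.const 0))
        (Primrec.const _) ?_) hp
      exact Primrec.nat_add.comp (Primrec.nat_add.comp (Primrec.nat_mul.comp (Primrec.const 4)
        (Primrec₂.natPair.comp (Primrec.const 0) hp)) (Primrec.const 1)) (Primrec.const 5)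
    obtain ⟨h, hh⟩ := of_primrec hh
    have ev : ∀ x, evalo (chi X) (.comp u h) x = evalo (chi X) (OCode.ofNat
        (if x = 0 then kIdx eD else 4 * Nat.pair 0 (x - 1) + 1 + 5)) (x - 1) := by
      intro x
      rw [comp_eq (by rw [hh]; exact Part.mem_some _)]
      exact hu _ _
    refine ⟨⟨_, .comp u h, rfl⟩, ?_, fun n => ?_⟩
    · show evalo (chi X) (.comp u h) 0 = _
      rw [ev]
      exact Part.eq_some_iff.2 (kIdx_eval _ _ _)
    · show evalo (chi X) (.comp u h) (n + 1) = _
      rw [ev]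
      simp only [Nat.add_eq_zero_iff, one_ne_zero, and_false, if_false, Nat.add_sub_cancel]
      rw [ofNat_mod1]
      congr 2
      rw [OCode.ofNat]
  obtain ⟨D, hD0, hD1⟩ := hD
  classical
  let val : ℕ → Bel X := fun n => if n ∈ jump X then num X 0 else bot
  have hval : ∀ n, val n ∈ bXApp X D (num X n) := by
    intro n
    apply bXApp_mem
    have hDn : (val n).1 = fun _ => D.1 (n + 1) := by
      funext x
      rw [hD1]
      by_cases hn : n ∈ jump X
      · have hv : val n = num X 0 := if_pos hn
        rw [hv]
        symm
        obtain ⟨y, hy⟩ := Part.dom_iff_mem.1 (show (phi (chi X) n n).Dom from hn)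
        exact Part.eq_some_iff.2 (mem_comp.2 ⟨y, hy, Part.mem_some _⟩)
      · have hv : val n = bot := if_neg hn
        rw [hv]
        symm
        refine Part.eq_none_iff.2 fun y hy => hn ?_
        obtain ⟨z, hz, -⟩ := mem_comp.1 hy
        exact Part.dom_iff_mem.2 ⟨z, hz⟩
    rw [hDn]
    funext x
    rw [hD0, Part.bind_some, phi, heD]
    have h1 : 2 * (n + 1) ∈ evalo (pjoin D.1 (num X n).1)
        (.comp w (.comp .oracle (.comp .succ .zero))) x := by
      refine mem_comp.2 ⟨n, mem_comp.2 ⟨1, mem_comp.2 ⟨0, ?_, ?_⟩, ?_⟩, ?_⟩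
      · exact Part.mem_some _
      · exact Part.mem_some _
      · simp [evalo, pjoin, num, toPFun]
      · rw [hw]; exact Part.mem_some _
    rw [comp_eq h1]
    simp [evalo, pjoin]
  -- the images
  obtain ⟨m0, hm0⟩ : ∃ m, (f (num X 0)).1 m ≠ (f bot).1 m := by
    by_contra hcon
    push Not at hcon
    have h1 : num X 0 = bot := inj (Subtype.ext (funext hcon))
    have h2 := congrArg (fun z : Bel X => (z.1 0).Dom) h1
    simp [num, toPFun, bot] at h2
  have idx : ∀ a : K2el Y, ∃ i, evalo (chi Y) (OCode.ofNat i) = toPFun a.1 := by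
    rintro ⟨a, c, hc⟩
    obtain ⟨i, rfl⟩ := ofNat_surj c
    exact ⟨i, hc⟩
  have sub : ∀ a : K2el Y, ∃ s : ℕ → ℕ, Primrec s ∧ ∀ (i : ℕ) (b c : K2el Y),
      evalo (chi Y) (OCode.ofNat i) = toPFun b.1 → c ∈ k2XApp Y a b →
      evalo (chi Y) (OCode.ofNat (s i)) = toPFun c.1 := by
    intro a
    obtain ⟨ia, hia⟩ := idx a
    obtain ⟨s, hs, h⟩ := exists_subst (Y.indicator fun _ => 1) ia (OCode.ofNat (a.1 0))
    refine ⟨s, hs, fun i b c hb hc => ?_⟩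
    rw [k2XApp_mem hc, ← hia, ← hb]
    exact h i
  obtain ⟨i0, hi0⟩ := idx (f (num X 0))
  obtain ⟨s, hs, hs'⟩ := sub (f (num X eS))
  obtain ⟨t, ht, ht'⟩ := sub (f D)
  have iter : ∀ n, evalo (chi Y) (OCode.ofNat (s^[n] i0)) = toPFun (f (num X n)).1 := by
    intro n
    induction n with
    | zero => exact hi0
    | succ n ih =>
      rw [Function.iterate_succ_apply']
      exact hs' _ _ _ ih (hom _ _ _ (hS n))
  have res : ∀ n, evalo (chi Y) (OCode.ofNat (t (s^[n] i0))) = toPFun (f (val n)).1 :=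
    fun n => ht' _ _ _ (iter n) (hom _ _ _ (hval n))
  obtain ⟨u, hu⟩ := exists_univ (Y.indicator fun _ => 1)
  have hp : Primrec fun n => Nat.pair (t (s^[n] i0)) m0 :=
    Primrec₂.natPair.comp (ht.comp (Primrec.nat_iterate Primrec.id (Primrec.const i0)
      (hs.comp Primrec.snd))) (Primrec.const m0)
  obtain ⟨p, hp⟩ := TC.prim (O := chi Y) hp
  have hr : TC (chi Y) fun n => (f (val n)).1 m0 := by
    refine ⟨.comp u p, fun n => mem_comp.2 ⟨_, hp n, ?_⟩⟩
    have h1 := hu (t (s^[n] i0)) m0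
    have h2 := congrFun (res n) m0
    exact Part.eq_some_iff.1 (h1.trans h2)
  have hfin : TC (chi Y) fun n =>
      if (f (val n)).1 m0 = (f (num X 0)).1 m0 then 1 else 0 :=
    TC.comp (TC.prim (f := fun z => if z = (f (num X 0)).1 m0 then 1 else 0)
      (Primrec.ite (Primrec.eq.comp Primrec.id (Primrec.const _)) (Primrec.const 1)
        (Primrec.const 0))) hr
  have heq : chi (jump X) = toPFun fun n =>
      if (f (val n)).1 m0 = (f (num X 0)).1 m0 then 1 else 0 := by
    funext n
    by_cases hn : n ∈ jump X
    · have hv : val n = num X 0 := if_pos hn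
      simp [chi, toPFun, hv, hn]
    · have hv : val n = bot := if_neg hn
      simp [chi, toPFun, hv, hn, hm0.symm]
  unfold TuringLE
  rw [heq]
  exact hfin.rec

theorem stmt14 :
    (∀ X Y : Set ℕ,
      (∃ f : Bel X → K2el Y, IsPCAEmbedding (bXApp X) (k2XApp Y) f) →
        TuringLE (jump X) Y) ∧
    (∀ X : Set ℕ, ¬ ∃ f : Bel X → K2el X, IsPCAEmbedding (bXApp X) (k2XApp X) f) := by
  refine ⟨fun X Y ⟨f, hf⟩ => main1 X Y f hf, fun X ⟨f, hf⟩ => ?_⟩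
  exact jump_not_le X (main1 X X f hf)

end PCAEmb
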